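/- arXiv:2201.10847 — 6 statements merged into one kernel-verified Lean document; each statement's English description precedes it below -/
import Mathlib

section
/- Let G be a t.d.l.c. group and μ a left Haar measure on G. If G is CO-bounded with respect to μ, i.e., there exists a constant c such that μ(U) ≤ c for every compact open subgroup U of G, then G is unimodular: μ is also invariant under right translations. -/
open MeasureTheory

/-!
Let `U` be a compact open subgroup. For a left Haar measure `μ` with modular function `Δ`, left
invariance gives `μ (g U g⁻¹) = μ (U g⁻¹) = Δ(g) μ(U)`. The conjugates of `U` are again compact
open subgroups, so a uniform bound on their measures makes `Δ` a bounded homomorphism into the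
positive reals, hence trivial.
-/

open scoped NNReal Pointwise Topology

theorem monoidHom_eq_one_of_bddAbove_range {G R : Type*} [Group G] [Semiring R] [LinearOrder R]
    [IsStrictOrderedRing R] [ExistsAddOfLE R] [Archimedean R] (f : G →* R) (hf₀ : ∀ g, 0 ≤ f g)
    (hf : BddAbove (Set.range f)) : f = 1 := by
  obtain ⟨C, hC⟩ := hf
  have le_one (g : G) : f g ≤ 1 := by
    by_contra! one_lt
    obtain ⟨n, hn⟩ := pow_unbounded_of_one_lt C one_lt
    exact hn.not_ge (map_pow f g n ▸ hC ⟨g ^ n, rfl⟩)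
  ext g
  refine (le_one g).antisymm ?_
  calc 1 = f g⁻¹ * f g := by rw [← map_mul, inv_mul_cancel, map_one]
    _ ≤ f g := mul_le_of_le_one_left (hf₀ g) (le_one g⁻¹)

theorem isOpen_stabilizer_of_isCompact_of_isOpen {G X : Type*} [Group G] [TopologicalSpace G]
    [IsTopologicalGroup G] [TopologicalSpace X] [MulAction G X] [ContinuousSMul G X] {W : Set X}
    (hWc : IsCompact W) (hWo : IsOpen W) : IsOpen (MulAction.stabilizer G W : Set G) := by
  have smul_subset : ∀ᶠ g in 𝓝 (1 : G), g • W ⊆ W := by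
    simp only [Set.smul_set_subset_iff]
    refine hWc.eventually_forall_of_forall_eventually fun x hx ↦ ?_
    exact continuous_smul.continuousAt.eventually_mem (hWo.mem_nhds (by rwa [one_smul]))
  have inv_smul_subset : ∀ᶠ g in 𝓝 (1 : G), g⁻¹ • W ⊆ W :=
    (continuous_inv.tendsto' 1 1 inv_one).eventually smul_subset
  refine Subgroup.isOpen_of_mem_nhds _ (g := 1) ?_
  filter_upwards [smul_subset, inv_smul_subset] with g hg hg'
  exact hg.antisymm (Set.subset_smul_set_iff.2 hg')

/-- Van Dantzig's theorem. -/
theorem exists_isCompact_openSubgroup_subset {G : Type*} [Group G] [TopologicalSpace G]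
    [IsTopologicalGroup G] [LocallyCompactSpace G] [TotallyDisconnectedSpace G] {s : Set G}
    (hs : s ∈ 𝓝 1) : ∃ U : OpenSubgroup G, IsCompact (U : Set G) ∧ (U : Set G) ⊆ s := by
  obtain ⟨K, hK, hKs, hKc⟩ := local_compact_nhds hs
  obtain ⟨W, hW : IsClopen W, one_mem, hWK⟩ :=
    loc_compact_Haus_tot_disc_of_zero_dim.mem_nhds_iff.1 hK
  have hWc : IsCompact W := hKc.of_isClosed_subset hW.isClosed hWK
  let U : OpenSubgroup G :=
    ⟨MulAction.stabilizer G W, isOpen_stabilizer_of_isCompact_of_isOpen hWc hW.isOpen⟩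
  have hUW : (U : Set G) ⊆ W := fun g (hg : g • W = W) ↦ by
    simpa only [hg, smul_eq_mul, mul_one] using Set.smul_mem_smul_set (a := g) one_mem
  exact ⟨U, hWc.of_isClosed_subset U.isClosed hUW, hUW.trans (hWK.trans hKs)⟩

section ModularCharacter

open Measure

variable {G : Type*} [Group G] [TopologicalSpace G] [IsTopologicalGroup G] [LocallyCompactSpace G]
  [MeasurableSpace G] [BorelSpace G] (μ : Measure G) [μ.IsHaarMeasure] [μ.Regular]

theorem map_mul_right_eq_modularCharacter_smul (g : G) :
    μ.map (· * g) = modularCharacter g • μ := by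
  have : (μ.map (· * g)).Regular := Regular.map (Homeomorph.mulRight g)
  calc μ.map (· * g) = haarScalarFactor (μ.map (· * g)) μ • μ :=
        isMulLeftInvariant_eq_smul_of_regular _ μ
    _ = modularCharacter g • μ := by rw [← modularCharacterFun_eq_haarScalarFactor]; rfl

theorem measure_conjAct_smul (g : ConjAct G) (s : Set G) :
    μ (g • s) = modularCharacter (ConjAct.ofConjAct g) * μ s := by
  set h : G := ConjAct.ofConjAct g with h_def
  have conj_smul : g • s = (h⁻¹ * ·) ⁻¹' ((· * h) ⁻¹' s) := by
    ext x
    simp [Set.mem_smul_set_iff_inv_smul_mem, ConjAct.smul_def, h_def]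
  calc μ (g • s) = μ ((· * h) ⁻¹' s) := by rw [conj_smul, measure_preimage_mul]
    _ = μ.map (· * h) s := ((MeasurableEquiv.mulRight h).map_apply s).symm
    _ = modularCharacter h * μ s := by rw [map_mul_right_eq_modularCharacter_smul]; rfl

theorem bddAbove_range_modularCharacter {s : Set G} (hs₀ : μ s ≠ 0)
    (hs : ∃ c : ℝ≥0, ∀ g : ConjAct G, μ (g • s) ≤ c) :
    BddAbove (Set.range (modularCharacter (G := G))) := by
  obtain ⟨c, hc⟩ := hs
  have hs_top : μ s ≠ ⊤ := by
    simpa only [one_smul] using ne_top_of_le_ne_top ENNReal.coe_ne_top (hc 1)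
  simp only [measure_conjAct_smul] at hc
  lift μ s to ℝ≥0 using hs_top with m
  refine ⟨c / m, Set.forall_mem_range.2 fun g ↦ ?_⟩
  rw [le_div_iff₀ (pos_iff_ne_zero.2 (by exact_mod_cast hs₀))]
  exact_mod_cast hc (ConjAct.toConjAct g)

theorem tdlc_CObounded_unimodular_general {s : Set G} (hs₀ : μ s ≠ 0)
    (hs : ∃ c : ℝ≥0, ∀ g : ConjAct G, μ (g • s) ≤ c) : μ.IsMulRightInvariant where
  map_mul_right_eq_self g := by
    have modularCharacter_eq_one : modularCharacter (G := G) = 1 :=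
      monoidHom_eq_one_of_bddAbove_range _ (fun _ ↦ zero_le)
        (bddAbove_range_modularCharacter μ hs₀ hs)
    rw [map_mul_right_eq_modularCharacter_smul, modularCharacter_eq_one, MonoidHom.one_apply,
      one_smul]

end ModularCharacter

/-- A totally disconnected locally compact group that is
`CO`-bounded with respect to a left Haar measure `μ` (i.e. there is a constant `c`
bounding the measure of every compact open subgroup) is unimodular:
`μ` is also right-invariant. -/
theorem tdlc_CObounded_unimodular {G : Type*} [Group G] [TopologicalSpace G]
    [IsTopologicalGroup G] [LocallyCompactSpace G] [TotallyDisconnectedSpace G] [T2Space G]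
    [MeasurableSpace G] [BorelSpace G]
    (μ : Measure G) [μ.IsHaarMeasure] [μ.Regular]
    (hbound : ∃ c : NNReal, ∀ U : Subgroup G,
      IsCompact (U : Set G) → IsOpen (U : Set G) → μ (U : Set G) ≤ c) :
    μ.IsMulRightInvariant := by
  obtain ⟨U, hU, -⟩ := exists_isCompact_openSubgroup_subset (G := G) Filter.univ_mem
  exact tdlc_CObounded_unimodular_general μ (U.isOpen.measure_ne_zero μ ⟨1, U.one_mem⟩) <|
    hbound.imp fun c hc g ↦ hc (g • U.toSubgroup) (hU.smul g) (U.isOpen.smul g)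
end

section
/- Let G be a t.d.l.c. group with left Haar measure μ, and assume G is CO-bounded with respect to μ. Then every strictly increasing sequence of compact open subgroups of G is finite; that is, there is no map U : ℕ → Subgroup G such that each U(n) is compact and open and U is strictly monotone with respect to inclusion. -/
/-!
If `H < K` are subgroups and `g ∈ K \ H`, then `K` contains the two disjoint cosets `H` and `g • H`,
which have equal measure by left invariance. Hence the measure at least doubles at each step of a
strictly increasing sequence, and so it is unbounded as soon as the first subgroup has positive
measure.
-/

open MeasureTheory

section LeftInvariant

open Filter Topology
open scoped ENNReal Pointwise

variable {G : Type*} [Group G]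

lemma disjoint_coe_smul_coe_of_notMem {H : Subgroup G} {g : G} (hg : g ∉ H) :
    Disjoint (H : Set G) (g • (H : Set G)) := by
  refine Set.disjoint_left.2 fun x hx hgx => hg ?_
  have hgx' : g⁻¹ * x ∈ H := Set.mem_smul_set_iff_inv_smul_mem.1 hgx
  exact H.inv_mem_iff.1 ((H.mul_mem_cancel_right hx).1 hgx')

variable [MeasurableSpace G] (μ : Measure G) [μ.IsMulLeftInvariant]

lemma two_mul_measure_le_of_lt {H K : Subgroup G} (hH : MeasurableSet (H : Set G)) (hHK : H < K) :
    2 * μ (H : Set G) ≤ μ (K : Set G) := by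
  obtain ⟨hle, g, hgK, hgH⟩ := SetLike.lt_iff_le_and_exists.1 hHK
  have hgHK : g • (H : Set G) ⊆ K := (Set.smul_set_mono hle).trans (smul_coe_set hgK).subset
  calc
    2 * μ (H : Set G) = μ (H : Set G) + μ (g • (H : Set G)) := by rw [measure_smul, two_mul]
    _ = μ ((H : Set G) ∪ g • (H : Set G)) :=
      (measure_union' (disjoint_coe_smul_coe_of_notMem hgH) hH).symm
    _ ≤ μ (K : Set G) := measure_mono (Set.union_subset hle hgHK)

lemma two_pow_mul_measure_le_of_strictMono {U : ℕ → Subgroup G}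
    (hU : ∀ n, MeasurableSet (U n : Set G)) (hmono : StrictMono U) (n : ℕ) :
    2 ^ n * μ (U 0 : Set G) ≤ μ (U n : Set G) := by
  induction n with
  | zero => simp
  | succ n ih =>
    calc
      2 ^ (n + 1) * μ (U 0 : Set G) = 2 * (2 ^ n * μ (U 0 : Set G)) := by ring
      _ ≤ 2 * μ (U n : Set G) := by gcongr
      _ ≤ μ (U (n + 1) : Set G) := two_mul_measure_le_of_lt μ (hU n) (hmono n.lt_succ_self)

lemma tendsto_measure_nhds_top_of_strictMono {U : ℕ → Subgroup G}
    (hU : ∀ n, MeasurableSet (U n : Set G)) (hmono : StrictMono U) (hpos : μ (U 0 : Set G) ≠ 0) :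
    Tendsto (fun n => μ (U n : Set G)) atTop (𝓝 ∞) := by
  have hpow : Tendsto (fun n : ℕ => (2 : ℝ≥0∞) ^ n) atTop (𝓝 ∞) :=
    ENNReal.tendsto_pow_atTop_nhds_top_iff.2 ENNReal.one_lt_two
  have hmul : Tendsto (fun n : ℕ => 2 ^ n * μ (U 0 : Set G)) atTop (𝓝 ∞) := by
    rw [← ENNReal.top_mul hpos]
    exact ENNReal.Tendsto.mul_const hpow (.inl ENNReal.top_ne_zero)
  exact tendsto_nhds_top_mono' hmul (two_pow_mul_measure_le_of_strictMono μ hU hmono)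

theorem tdlc_CObounded_no_strict_chain_general {𝒰 : Set (Subgroup G)}
    (hmeas : ∀ U ∈ 𝒰, MeasurableSet (U : Set G)) (hpos : ∀ U ∈ 𝒰, μ (U : Set G) ≠ 0)
    (hbound : ∃ c : NNReal, ∀ U ∈ 𝒰, μ (U : Set G) ≤ c) :
    ¬ ∃ U : ℕ → Subgroup G, (∀ n, U n ∈ 𝒰) ∧ StrictMono U := by
  rintro ⟨U, hU, hmono⟩
  obtain ⟨c, hc⟩ := hbound
  have hlim : Tendsto (fun n => μ (U n : Set G)) atTop (𝓝 ∞) :=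
    tendsto_measure_nhds_top_of_strictMono μ (fun n => hmeas _ (hU n)) hmono (hpos _ (hU 0))
  obtain ⟨n, hn⟩ := (hlim.eventually_const_lt ENNReal.coe_lt_top).exists
  exact hn.not_ge (hc _ (hU n))

end LeftInvariant

/-- In a totally disconnected locally compact group that is
`CO`-bounded with respect to a left Haar measure `μ`, there is no strictly
increasing sequence of compact open subgroups. -/
theorem tdlc_CObounded_no_strict_chain {G : Type*} [Group G] [TopologicalSpace G]
    [IsTopologicalGroup G] [LocallyCompactSpace G] [TotallyDisconnectedSpace G] [T2Space G]
    [MeasurableSpace G] [BorelSpace G]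
    (μ : Measure G) [μ.IsHaarMeasure] [μ.Regular]
    (hbound : ∃ c : NNReal, ∀ U : Subgroup G,
      IsCompact (U : Set G) → IsOpen (U : Set G) → μ (U : Set G) ≤ c) :
    ¬ ∃ U : ℕ → Subgroup G,
        (∀ n, IsCompact (U n : Set G) ∧ IsOpen (U n : Set G)) ∧ StrictMono U :=
  tdlc_CObounded_no_strict_chain_general μ
    (𝒰 := {U | IsCompact (U : Set G) ∧ IsOpen (U : Set G)})
    (fun _ hU => hU.2.measurableSet)
    (fun U hU => hU.2.measure_ne_zero μ (OneMemClass.coe_nonempty U))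
    (hbound.imp fun _ hc U hU => hc U hU.1 hU.2)
end

section
/- Let G be a t.d.l.c. group. If every group homomorphism φ from G to the additive group ℝ whose kernel is an open subgroup of G (equivalently, every homomorphism continuous with respect to the discrete topology on ℝ) is trivial, then G is unimodular: every left Haar measure on G is also invariant under right translations. -/
open MeasureTheory

/-!
Let `Δ` be the modular character. If `K` is a compact open subgroup and `k ∈ K`, then `K * k = K`
has finite positive Haar measure, so `Δ k = 1`. Hence `log ∘ Δ` is a homomorphism to `ℝ` whose
kernel contains `K` and is therefore open; if it is trivial, then `Δ = 1`. A t.d.l.c. group has a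
compact open subgroup by van Dantzig's theorem: around `1` there is a compact open set `U`, and the
stabilizer of `U` under left translation is an open subgroup contained in `U`.
-/

open Measure Topology
open scoped Pointwise

section CompactOpenSubgroup

variable {G : Type*} [Group G] [TopologicalSpace G] [IsTopologicalGroup G]

theorem isOpen_stabilizer_of_isCompact_of_isOpen_s2 {U : Set G} (hUc : IsCompact U) (hUo : IsOpen U) :
    IsOpen (MulAction.stabilizer G U : Set G) := by
  obtain ⟨V, hV, hVU⟩ := compact_open_separated_mul_left hUc hUo subset_rfl
  have smul_subset {v : G} (hv : v ∈ V) : v • U ⊆ U := (Set.smul_set_subset_mul hv).trans hVU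
  refine Subgroup.isOpen_of_mem_nhds (g := 1) _ ?_
  filter_upwards [hV, inv_mem_nhds_one G hV] with v hv hv_inv
  exact (smul_subset hv).antisymm (Set.subset_smul_set_iff.mpr (smul_subset hv_inv))

theorem exists_isCompact_openSubgroup_subset_of_mem_nhds_one [LocallyCompactSpace G]
    [TotallyDisconnectedSpace G] [T2Space G] {W : Set G} (hW : W ∈ 𝓝 1) :
    ∃ K : OpenSubgroup G, IsCompact (K : Set G) ∧ (K : Set G) ⊆ W := by
  obtain ⟨C, hC, hCW, hCc⟩ := local_compact_nhds hW
  obtain ⟨U, hU, h1U, hUC⟩ := loc_compact_Haus_tot_disc_of_zero_dim.mem_nhds_iff.mp hC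
  have hUc : IsCompact U := hCc.of_isClosed_subset hU.isClosed hUC
  let K : OpenSubgroup G :=
    ⟨MulAction.stabilizer G U, isOpen_stabilizer_of_isCompact_of_isOpen_s2 hUc hU.isOpen⟩
  have hKU : (K : Set G) ⊆ U := fun k (hk : k • U = U) ↦ by
    simpa only [hk, smul_eq_mul, mul_one] using Set.smul_mem_smul_set (a := k) h1U
  exact ⟨K, hUc.of_isClosed_subset K.isClosed hKU, hKU.trans (hUC.trans hCW)⟩

end CompactOpenSubgroup

section ModularCharacter

variable {G : Type*} [Group G] [TopologicalSpace G] [IsTopologicalGroup G] [LocallyCompactSpace G]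

theorem map_mul_right_eq_modularCharacter_smul_of_regular [MeasurableSpace G] [BorelSpace G]
    (μ : Measure G) [μ.IsHaarMeasure] [μ.Regular] (g : G) :
    map (· * g) μ = modularCharacter g • μ := by
  have : (map (· * g) μ).Regular := Regular.map (Homeomorph.mulRight g)
  calc map (· * g) μ = haarScalarFactor (map (· * g) μ) μ • μ :=
        isMulLeftInvariant_eq_smul_of_regular _ μ
    _ = modularCharacter g • μ :=
        congrArg (· • μ) (modularCharacterFun_eq_haarScalarFactor μ g).symm

theorem isMulRightInvariant_of_modularCharacter_eq_one [MeasurableSpace G] [BorelSpace G]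
    (μ : Measure G) [μ.IsHaarMeasure] [μ.Regular] (hΔ : modularCharacter (G := G) = 1) :
    μ.IsMulRightInvariant where
  map_mul_right_eq_self g := by
    rw [map_mul_right_eq_modularCharacter_smul_of_regular, hΔ, MonoidHom.one_apply, one_smul]

theorem modularCharacter_eq_one_of_preimage_mul_right_eq {s : Set G} (hs : IsCompact s)
    (hs_int : (interior s).Nonempty) {g : G} (hg : (· * g) ⁻¹' s = s) :
    modularCharacter g = 1 := by
  borelize G
  have h_scale : (modularCharacter g : ENNReal) * haar s = 1 * haar s := by
    calc (modularCharacter g : ENNReal) * haar s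
        = map (· * g) haar s := by
          rw [map_mul_right_eq_modularCharacter_smul_of_regular]; rfl
      _ = haar ((· * g) ⁻¹' s) := (MeasurableEquiv.mulRight g).map_apply s
      _ = 1 * haar s := by rw [hg, one_mul]
  have h_pos : haar s ≠ 0 := (measure_pos_of_nonempty_interior haar hs_int).ne'
  exact_mod_cast (ENNReal.mul_left_inj h_pos hs.measure_ne_top).mp h_scale

theorem isOpen_ker_modularCharacter_of_isCompact_openSubgroup (K : OpenSubgroup G)
    (hK : IsCompact (K : Set G)) : IsOpen (modularCharacter (G := G).ker : Set G) := by
  refine Subgroup.isOpen_mono (fun k hk ↦ ?_) K.isOpen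
  have hK_int : (interior (K : Set G)).Nonempty := by
    rw [K.isOpen.interior_eq]
    exact ⟨1, one_mem K⟩
  exact modularCharacter_eq_one_of_preimage_mul_right_eq hK hK_int
    (Set.ext fun _ ↦ Subgroup.mul_mem_cancel_right _ hk)

theorem modularCharacter_pos (g : G) : (0 : ℝ) < modularCharacter g :=
  NNReal.coe_pos.mpr (modularCharacterFun_pos g)

theorem log_modularCharacter_mul (g h : G) :
    Real.log (modularCharacter (g * h)) =
      Real.log (modularCharacter g) + Real.log (modularCharacter h) := by
  rw [map_mul, NNReal.coe_mul,
    Real.log_mul (modularCharacter_pos g).ne' (modularCharacter_pos h).ne']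

theorem log_modularCharacter_eq_zero_iff {g : G} :
    Real.log (modularCharacter g) = 0 ↔ modularCharacter g = 1 where
  mp h := NNReal.coe_eq_one.mp (Real.eq_one_of_pos_of_log_eq_zero (modularCharacter_pos g) h)
  mpr h := by rw [h, NNReal.coe_one, Real.log_one]

end ModularCharacter

theorem tdlc_unimodular_of_no_open_kernel_hom_general {G : Type*} [Group G] [TopologicalSpace G]
    [IsTopologicalGroup G] [MeasurableSpace G] [BorelSpace G]
    (K : OpenSubgroup G) (hK : IsCompact (K : Set G))
    (htriv : ∀ φ : G → ℝ, (∀ x y : G, φ (x * y) = φ x + φ y) →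
      IsOpen {g : G | φ g = 0} → φ = 0) :
    ∀ μ : Measure G, μ.IsHaarMeasure → μ.Regular → μ.IsMulRightInvariant := by
  intro μ _ _
  have : LocallyCompactSpace G :=
    hK.locallyCompactSpace_of_mem_nhds_of_group K.mem_nhds_one
  have h_ker : IsOpen {g : G | Real.log (modularCharacter g) = 0} := by
    simp only [log_modularCharacter_eq_zero_iff]
    exact isOpen_ker_modularCharacter_of_isCompact_openSubgroup K hK
  have h_log : (fun g : G ↦ Real.log (modularCharacter g)) = 0 :=
    htriv _ log_modularCharacter_mul h_ker
  exact isMulRightInvariant_of_modularCharacter_eq_one μ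
    (MonoidHom.ext fun g ↦ log_modularCharacter_eq_zero_iff.mp (congrFun h_log g))

/-- If every group homomorphism from a t.d.l.c. group `G` to the
additive group `ℝ` with open kernel is trivial, then `G` is unimodular: every
left Haar measure on `G` is also right-invariant. -/
theorem tdlc_unimodular_of_no_open_kernel_hom {G : Type*} [Group G] [TopologicalSpace G]
    [IsTopologicalGroup G] [LocallyCompactSpace G] [TotallyDisconnectedSpace G] [T2Space G]
    [MeasurableSpace G] [BorelSpace G]
    (htriv : ∀ φ : G → ℝ, (∀ x y : G, φ (x * y) = φ x + φ y) →
      IsOpen {g : G | φ g = 0} → φ = 0) :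
    ∀ μ : Measure G, μ.IsHaarMeasure → μ.Regular → μ.IsMulRightInvariant := by
  obtain ⟨K, hK, -⟩ := exists_isCompact_openSubgroup_subset_of_mem_nhds_one (G := G) Filter.univ_mem
  exact tdlc_unimodular_of_no_open_kernel_hom_general K hK htriv
end

section
/- Let G be a compactly generated t.d.l.c. group. Then the real vector space CHom(G,ℝ) of group homomorphisms G → (ℝ,+) with open kernel is finite-dimensional. More precisely, if U is a compact open subgroup of G and S ⊆ G is a finite subset such that U together with S generates G, then dim_ℝ CHom(G,ℝ) ≤ |S|. -/
/-- The kernel of a homomorphism `φ : G → ℝ` (multiplicative to additive),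
as a subgroup of `G`. -/
def homKer {G : Type*} [Group G] (φ : G → ℝ)
    (hφ : ∀ x y : G, φ (x * y) = φ x + φ y) : Subgroup G where
  carrier := {g : G | φ g = 0}
  one_mem' := by
    have h := hφ 1 1
    rw [one_mul] at h
    show φ 1 = 0
    linarith
  mul_mem' := by
    intro a b ha hb
    show φ (a * b) = 0
    rw [hφ a b]
    simp only [Set.mem_setOf_eq] at ha hb
    rw [ha, hb, add_zero]
  inv_mem' := by
    intro a ha
    simp only [Set.mem_setOf_eq] at ha
    show φ a⁻¹ = 0
    have h := hφ a a⁻¹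
    rw [mul_inv_cancel] at h
    have h1 := hφ 1 1
    rw [one_mul] at h1
    have : φ 1 = 0 := by linarith
    rw [this] at h
    linarith

/-- `CHom G` is the real vector space of group homomorphisms from `G` to the
additive group `ℝ` whose kernel is open (equivalently, which are continuous for
the discrete topology on `ℝ`), as a linear subspace of `G → ℝ`. -/
def CHom (G : Type*) [Group G] [TopologicalSpace G] [IsTopologicalGroup G] :
    Submodule ℝ (G → ℝ) where
  carrier := {φ : G → ℝ | (∀ x y : G, φ (x * y) = φ x + φ y) ∧ IsOpen {g : G | φ g = 0}}
  zero_mem' := by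
    refine ⟨fun x y => by simp, ?_⟩
    simp only [Pi.zero_apply, Set.setOf_true]; exact isOpen_univ
  add_mem' := by
    rintro φ ψ ⟨hφ, hφo⟩ ⟨hψ, hψo⟩
    have hsum : ∀ x y : G, (φ + ψ) (x * y) = (φ + ψ) x + (φ + ψ) y := by
      intro x y
      simp only [Pi.add_apply, hφ x y, hψ x y]
      ring
    refine ⟨hsum, ?_⟩
    have hle : homKer φ hφ ⊓ homKer ψ hψ ≤ homKer (φ + ψ) hsum := by
      rintro g ⟨hg1, hg2⟩
      show (φ + ψ) g = 0
      have h1 : φ g = 0 := hg1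
      have h2 : ψ g = 0 := hg2
      simp [Pi.add_apply, h1, h2]
    have hopen : IsOpen ((homKer φ hφ ⊓ homKer ψ hψ : Subgroup G) : Set G) := by
      have : ((homKer φ hφ ⊓ homKer ψ hψ : Subgroup G) : Set G)
          = {g : G | φ g = 0} ∩ {g : G | ψ g = 0} := rfl
      rw [this]
      exact hφo.inter hψo
    exact Subgroup.isOpen_mono hle hopen
  smul_mem' := by
    rintro c φ ⟨hφ, hφo⟩
    refine ⟨fun x y => by simp only [Pi.smul_apply, hφ x y, smul_eq_mul]; ring, ?_⟩
    rcases eq_or_ne c 0 with rfl | hc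
    · have : {g : G | ((0 : ℝ) • φ) g = 0} = Set.univ := by
        ext g; simp
      rw [this]; exact isOpen_univ
    · have : {g : G | (c • φ) g = 0} = {g : G | φ g = 0} := by
        ext g
        simp [Pi.smul_apply, smul_eq_mul, hc]
      rw [this]
      exact hφo

/-!
Every open subgroup of `G` has finite relative index in the compact subgroup `U`, so every element
of `U` has a positive power in the kernel of a given `φ ∈ CHom G`; as `ℝ` is torsion-free, `φ`
vanishes on `U`. The kernel is also closed, so `φ` is determined by its values on any `S` that
together with `U` generates a dense subgroup: restriction to `S` embeds `CHom G` into `S → ℝ`.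
-/

section OpenSubgroups

variable {G : Type*} [Group G] [TopologicalSpace G] [SeparatelyContinuousMul G]

theorem relIndex_ne_zero_of_isOpen_of_isCompact {V K : Subgroup G} (hV : IsOpen (V : Set G))
    (hK : IsCompact (K : Set G)) : V.relIndex K ≠ 0 := by
  have : SeparatelyContinuousMul K := K.toSubmonoid.separatelyContinuousMul
  have : CompactSpace K := isCompact_iff_compactSpace.mp hK
  have : Finite (K ⧸ V.subgroupOf K) :=
    (V.subgroupOf K).quotient_finite_of_isOpen (K.subgroupOf_isOpen V hV)
  exact Subgroup.index_ne_zero_of_finite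

theorem eq_top_of_isOpen_of_dense {V : Subgroup G} (hV : IsOpen (V : Set G))
    (hd : Dense (V : Set G)) : V = ⊤ :=
  SetLike.coe_injective <| by
    rw [← (V.isClosed_of_isOpen hV).closure_eq, hd.closure_eq, Subgroup.coe_top]

theorem le_ker_of_isCompact_of_isOpen_ker {M : Type*} [Monoid M] [IsMulTorsionFree M] {f : G →* M}
    (hf : IsOpen (f.ker : Set G)) {K : Subgroup G} (hK : IsCompact (K : Set G)) : K ≤ f.ker := by
  intro g hg
  obtain ⟨n, hn, -, hgn⟩ := Subgroup.exists_pow_mem_of_relIndex_ne_zero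
    (relIndex_ne_zero_of_isOpen_of_isCompact hf hK) hg
  have hpow : f g ^ n = 1 := by rw [← map_pow, MonoidHom.mem_ker.mp hgn.1]
  exact MonoidHom.mem_ker.mpr ((pow_eq_one_iff_left hn.ne').mp hpow)

end OpenSubgroups

namespace CHom

variable {G : Type*} [Group G] [TopologicalSpace G] [IsTopologicalGroup G]

/-- An element of `CHom G`, a bare function `G → ℝ`, bundled as a group homomorphism; the additive
group `ℝ` is written multiplicatively. -/
def toMonoidHom (φ : CHom G) : G →* Multiplicative ℝ :=
  MonoidHom.mk' (fun g => Multiplicative.ofAdd (φ.1 g)) φ.2.1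

theorem mem_ker_toMonoidHom {φ : CHom G} {g : G} : g ∈ (toMonoidHom φ).ker ↔ φ.1 g = 0 :=
  Iff.rfl

theorem isOpen_ker_toMonoidHom (φ : CHom G) : IsOpen ((toMonoidHom φ).ker : Set G) :=
  φ.2.2

theorem eq_zero_of_dense_ker {φ : CHom G} (hd : Dense ((toMonoidHom φ).ker : Set G)) : φ = 0 := by
  have htop : (toMonoidHom φ).ker = ⊤ := eq_top_of_isOpen_of_dense (isOpen_ker_toMonoidHom φ) hd
  ext g
  exact mem_ker_toMonoidHom.mp (htop ▸ Subgroup.mem_top g)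

/-- The linear map restricting the elements of `CHom G` to a subset `s` of `G`. -/
def restrict_s3 (s : Set G) : CHom G →ₗ[ℝ] (s → ℝ) :=
  LinearMap.funLeft ℝ ℝ ((↑) : s → G) ∘ₗ (CHom G).subtype

theorem restrict_injective_of_dense {K : Subgroup G} (hK : IsCompact (K : Set G)) {s : Set G}
    (hd : Dense (Subgroup.closure ((K : Set G) ∪ s) : Set G)) :
    Function.Injective (restrict_s3 s) := by
  rw [injective_iff_map_eq_zero]
  intro φ hφ
  have hK_ker : K ≤ (toMonoidHom φ).ker :=
    le_ker_of_isCompact_of_isOpen_ker (isOpen_ker_toMonoidHom φ) hK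
  have hs_ker : s ⊆ (toMonoidHom φ).ker := fun g hg =>
    mem_ker_toMonoidHom.mpr (congrFun hφ ⟨g, hg⟩)
  have hclosure : Subgroup.closure ((K : Set G) ∪ s) ≤ (toMonoidHom φ).ker :=
    (Subgroup.closure_le _).mpr (Set.union_subset hK_ker hs_ker)
  exact eq_zero_of_dense_ker (hd.mono hclosure)

end CHom

theorem chom_finiteDimensional_of_compactlyGenerated_general {G : Type*} [Group G]
    [TopologicalSpace G] [IsTopologicalGroup G] (U : Subgroup G) (hUc : IsCompact (U : Set G))
    (S : Finset G) (hgen : Dense (Subgroup.closure ((U : Set G) ∪ (S : Set G)) : Set G)) :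
    FiniteDimensional ℝ (CHom G) ∧ Module.finrank ℝ (CHom G) ≤ S.card := by
  have hinj : Function.Injective (CHom.restrict_s3 (S : Set G)) :=
    CHom.restrict_injective_of_dense hUc hgen
  refine ⟨FiniteDimensional.of_injective _ hinj, ?_⟩
  calc Module.finrank ℝ (CHom G)
      ≤ Module.finrank ℝ (↥(S : Set G) → ℝ) := LinearMap.finrank_le_finrank_of_injective hinj
    _ = S.card := by simp

/-- Let `G` be a compactly generated t.d.l.c. group: say `U` is a
compact open subgroup and `S` a finite subset such that `U ∪ S` generates `G`.
Then the space `CHom(G,ℝ)` of homomorphisms `G → (ℝ,+)` with open kernel is a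
finite-dimensional real vector space of dimension at most `|S|`. -/
theorem chom_finiteDimensional_of_compactlyGenerated {G : Type*} [Group G]
    [TopologicalSpace G] [IsTopologicalGroup G] [LocallyCompactSpace G]
    [TotallyDisconnectedSpace G] [T2Space G]
    (U : Subgroup G) (hUc : IsCompact (U : Set G)) (hUo : IsOpen (U : Set G))
    (S : Finset G) (hgen : Subgroup.closure ((U : Set G) ∪ (S : Set G)) = ⊤) :
    FiniteDimensional ℝ (CHom G) ∧ Module.finrank ℝ (CHom G) ≤ S.card :=
  chom_finiteDimensional_of_compactlyGenerated_general U hUc S <| by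
    simp only [hgen, Subgroup.coe_top, dense_univ]
end

section
/- Let G be a t.d.l.c. group and let X and Y be open subgroups of G such that U := X ∩ Y is compact. Suppose that the canonical group homomorphism from the amalgamated free product X ∗_U Y (the pushout of the two inclusions U ↪ X and U ↪ Y) to G, induced by the inclusions of X and Y into G, is bijective. Then the restriction map φ ↦ (φ|_X, φ|_Y) is an ℝ-linear bijection from CHom(G,ℝ) onto CHom(X,ℝ) × CHom(Y,ℝ). In particular, dim_ℝ CHom(G,ℝ) = dim_ℝ CHom(X,ℝ) + dim_ℝ CHom(Y,ℝ). -/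
/-- Restriction of a homomorphism `G → ℝ` with open kernel to a subgroup
(with the subspace topology), as an `ℝ`-linear map `CHom G →ₗ[ℝ] CHom X`. -/
def CHom.restrict {G : Type*} [Group G] [TopologicalSpace G] [IsTopologicalGroup G]
    (X : Subgroup G) : CHom G →ₗ[ℝ] CHom ↥X where
  toFun φ := ⟨fun x : ↥X => φ.1 (x : G),
    fun x y => by simpa using φ.2.1 (x : G) (y : G),
    by
      have : {x : ↥X | φ.1 (x : G) = 0} = (Subtype.val : ↥X → G) ⁻¹' {g : G | φ.1 g = 0} :=
        rfl
      rw [this]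
      exact φ.2.2.preimage continuous_subtype_val⟩
  map_add' φ ψ := rfl
  map_smul' c φ := rfl

/-- The factors of the amalgam `X ∗_{X ⊓ Y} Y`, indexed by `Bool`. -/
def amalgFactor {G : Type*} [Group G] (X Y : Subgroup G) : Bool → Subgroup G
  | true => X
  | false => Y

/-- The inclusions of `U = X ⊓ Y` into the two factors of the amalgam. -/
def amalgIncl {G : Type*} [Group G] (X Y : Subgroup G) :
    ∀ b : Bool, ↥(X ⊓ Y) →* ↥(amalgFactor X Y b)
  | true => Subgroup.inclusion inf_le_left
  | false => Subgroup.inclusion inf_le_right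

/-- The canonical homomorphism from the amalgamated free product
`X ∗_{X ⊓ Y} Y` (the pushout of the two inclusions) to `G`, induced by the
inclusions of `X` and `Y` into `G`. -/
noncomputable def amalgamToGroup {G : Type*} [Group G] (X Y : Subgroup G) :
    Monoid.PushoutI (amalgIncl X Y) →* G :=
  Monoid.PushoutI.lift (fun b => (amalgFactor X Y b).subtype) (X ⊓ Y).subtype
    (by intro b; cases b <;> (ext x; rfl))

/-! A homomorphism to `ℝ` with open kernel has finite image on a compact group, hence vanishes there
because `ℝ` is torsion-free. So any elements of `CHom X` and `CHom Y` agree on `X ⊓ Y`, both being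
zero, and the universal property of the pushout glues them to a unique homomorphism on `G`. Its
kernel contains the kernel of its restriction to `X`, which is open in `G`. -/

section TopologicalGroup

variable {G M : Type*} [Group G] [TopologicalSpace G]

theorem monoidHom_eq_one_of_isOpen_ker [SeparatelyContinuousMul G] [CompactSpace G] [Group M]
    [IsMulTorsionFree M] (f : G →* M) (hf : IsOpen (f.ker : Set G)) : f = 1 := by
  have : Finite (G ⧸ f.ker) := f.ker.quotient_finite_of_isOpen hf
  ext g
  obtain ⟨n, hn, -, hgn⟩ :=
    Subgroup.exists_pow_mem_of_index_ne_zero Subgroup.index_ne_zero_of_finite (H := f.ker) g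
  have hfgn : f g ^ n = 1 := by rw [← map_pow, f.mem_ker.mp hgn]
  exact (pow_eq_one_iff_left hn.ne').mp hfgn

theorem isOpen_ker_of_isOpen_ker_comp_subtype [SeparatelyContinuousMul G] [MulOneClass M]
    {X : Subgroup G} (hX : IsOpen (X : Set G)) {f : G →* M}
    (hf : IsOpen ((f.comp X.subtype).ker : Set X)) : IsOpen (f.ker : Set G) := by
  have hle : (f.comp X.subtype).ker.map X.subtype ≤ f.ker :=
    Subgroup.map_le_iff_le_comap.mpr fun _ hx => hx
  exact Subgroup.isOpen_mono hle (hX.isOpenMap_subtype_val _ hf)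

end TopologicalGroup

section Amalgam

variable {G M : Type*} [Group G] [Monoid M] {X Y : Subgroup G}

theorem amalgamToGroup_of (b : Bool) (x : amalgFactor X Y b) :
    amalgamToGroup X Y (Monoid.PushoutI.of b x) = x := by
  rw [amalgamToGroup, Monoid.PushoutI.lift_of, Subgroup.subtype_apply]

theorem monoidHom_ext_of_surjective_amalgamToGroup
    (hsurj : Function.Surjective (amalgamToGroup X Y)) {f g : G →* M}
    (hX : f.comp X.subtype = g.comp X.subtype) (hY : f.comp Y.subtype = g.comp Y.subtype) :
    f = g := by
  rw [← MonoidHom.cancel_right hsurj]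
  refine Monoid.PushoutI.hom_ext_nonempty fun b => MonoidHom.ext fun x => ?_
  simp only [MonoidHom.comp_apply, amalgamToGroup_of]
  cases b with
  | true => exact DFunLike.congr_fun hX x
  | false => exact DFunLike.congr_fun hY x

/-- The homomorphism out of the amalgamated free product `X ∗_{X ⊓ Y} Y` given by homomorphisms on
the two factors that agree on `X ⊓ Y`. -/
noncomputable def amalgLift (f : X →* M) (g : Y →* M)
    (hfg : f.comp (Subgroup.inclusion inf_le_left) =
      g.comp (Subgroup.inclusion (inf_le_right : X ⊓ Y ≤ Y))) :
    Monoid.PushoutI (amalgIncl X Y) →* M :=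
  Monoid.PushoutI.lift (fun | true => f | false => g) (f.comp (Subgroup.inclusion inf_le_left))
    (fun | true => rfl | false => hfg.symm)

theorem amalgLift_of_true {f : X →* M} {g : Y →* M}
    (hfg : f.comp (Subgroup.inclusion inf_le_left) =
      g.comp (Subgroup.inclusion (inf_le_right : X ⊓ Y ≤ Y))) (x : X) :
    amalgLift f g hfg (Monoid.PushoutI.of (φ := amalgIncl X Y) true x) = f x :=
  Monoid.PushoutI.lift_of (φ := amalgIncl X Y) _ _ _ (i := true) x

theorem amalgLift_of_false {f : X →* M} {g : Y →* M}
    (hfg : f.comp (Subgroup.inclusion inf_le_left) =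
      g.comp (Subgroup.inclusion (inf_le_right : X ⊓ Y ≤ Y))) (y : Y) :
    amalgLift f g hfg (Monoid.PushoutI.of (φ := amalgIncl X Y) false y) = g y :=
  Monoid.PushoutI.lift_of (φ := amalgIncl X Y) _ _ _ (i := false) y

theorem exists_monoidHom_comp_subtype_eq (hbij : Function.Bijective (amalgamToGroup X Y))
    (f : X →* M) (g : Y →* M)
    (hfg : f.comp (Subgroup.inclusion inf_le_left) =
      g.comp (Subgroup.inclusion (inf_le_right : X ⊓ Y ≤ Y))) :
    ∃ h : G →* M, h.comp X.subtype = f ∧ h.comp Y.subtype = g := by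
  let e := MulEquiv.ofBijective (amalgamToGroup X Y) hbij
  have he (b : Bool) (x : amalgFactor X Y b) : e.symm x = Monoid.PushoutI.of b x :=
    e.symm_apply_eq.mpr (amalgamToGroup_of b x).symm
  refine ⟨(amalgLift f g hfg).comp e.symm.toMonoidHom, ?_, ?_⟩
  · ext x
    exact (congrArg (amalgLift f g hfg) (he true x)).trans (amalgLift_of_true hfg x)
  · ext y
    exact (congrArg (amalgLift f g hfg) (he false y)).trans (amalgLift_of_false hfg y)

end Amalgam

namespace CHom

variable {G : Type*} [Group G] [TopologicalSpace G] [IsTopologicalGroup G]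

/-- The element of `CHom G` given by a bundled homomorphism with open kernel; it is inverse to
`CHom.toMonoidHom`. -/
def ofMonoidHom (f : G →* Multiplicative ℝ) (hf : IsOpen (f.ker : Set G)) : CHom G :=
  ⟨fun g => (f g).toAdd, map_mul f, hf⟩

theorem toMonoidHom_injective : Function.Injective (toMonoidHom (G := G)) := fun _ _ h =>
  Subtype.ext <| funext <| DFunLike.congr_fun h

theorem toMonoidHom_ofMonoidHom (f : G →* Multiplicative ℝ) (hf : IsOpen (f.ker : Set G)) :
    toMonoidHom (ofMonoidHom f hf) = f :=
  rfl

theorem toMonoidHom_restrict (X : Subgroup G) (φ : CHom G) :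
    toMonoidHom (restrict X φ) = (toMonoidHom φ).comp X.subtype :=
  rfl

theorem toMonoidHom_comp_eq_one {K : Type*} [Group K] [TopologicalSpace K]
    [SeparatelyContinuousMul K] [CompactSpace K] (φ : CHom G) {f : K →* G} (hf : Continuous f) :
    (toMonoidHom φ).comp f = 1 :=
  monoidHom_eq_one_of_isOpen_ker _ ((isOpen_ker_toMonoidHom φ).preimage hf)

variable {X Y : Subgroup G}

theorem restrict_prod_injective (hsurj : Function.Surjective (amalgamToGroup X Y)) :
    Function.Injective ((restrict X).prod (restrict Y)) := fun _ _ h =>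
  toMonoidHom_injective <| monoidHom_ext_of_surjective_amalgamToGroup hsurj
    (congrArg (toMonoidHom ∘ Prod.fst) h) (congrArg (toMonoidHom ∘ Prod.snd) h)

theorem exists_restrict_eq (hX : IsOpen (X : Set G))
    (hbij : Function.Bijective (amalgamToGroup X Y)) (α : CHom X) (β : CHom Y)
    (hαβ : (toMonoidHom α).comp (Subgroup.inclusion inf_le_left) =
      (toMonoidHom β).comp (Subgroup.inclusion (inf_le_right : X ⊓ Y ≤ Y))) :
    ∃ φ : CHom G, restrict X φ = α ∧ restrict Y φ = β := by
  obtain ⟨f, hfX, hfY⟩ := exists_monoidHom_comp_subtype_eq hbij _ _ hαβ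
  have hf : IsOpen (f.ker : Set G) :=
    isOpen_ker_of_isOpen_ker_comp_subtype hX (hfX ▸ isOpen_ker_toMonoidHom α)
  refine ⟨ofMonoidHom f hf, toMonoidHom_injective ?_, toMonoidHom_injective ?_⟩
  · rw [toMonoidHom_restrict, toMonoidHom_ofMonoidHom, hfX]
  · rw [toMonoidHom_restrict, toMonoidHom_ofMonoidHom, hfY]

theorem restrict_prod_surjective (hX : IsOpen (X : Set G))
    (hU : IsCompact ((X ⊓ Y : Subgroup G) : Set G))
    (hbij : Function.Bijective (amalgamToGroup X Y)) :
    Function.Surjective ((restrict X).prod (restrict Y)) := by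
  rintro ⟨α, β⟩
  have : CompactSpace (X ⊓ Y : Subgroup G) := isCompact_iff_compactSpace.mp hU
  have hα : (toMonoidHom α).comp (Subgroup.inclusion (inf_le_left : X ⊓ Y ≤ X)) = 1 :=
    toMonoidHom_comp_eq_one α (continuous_inclusion inf_le_left)
  have hβ : (toMonoidHom β).comp (Subgroup.inclusion (inf_le_right : X ⊓ Y ≤ Y)) = 1 :=
    toMonoidHom_comp_eq_one β (continuous_inclusion inf_le_right)
  obtain ⟨φ, hφX, hφY⟩ := exists_restrict_eq hX hbij α β (hα.trans hβ.symm)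
  exact ⟨φ, Prod.ext hφX hφY⟩

end CHom

theorem chom_of_amalgam_general {G : Type*} [Group G] [TopologicalSpace G] [IsTopologicalGroup G]
    (X Y : Subgroup G) (hXo : IsOpen (X : Set G))
    (hUc : IsCompact ((X ⊓ Y : Subgroup G) : Set G))
    (hbij : Function.Bijective (amalgamToGroup X Y)) :
    Function.Bijective ((CHom.restrict X).prod (CHom.restrict Y)) ∧
      Module.rank ℝ (CHom G) = Module.rank ℝ (CHom ↥X) + Module.rank ℝ (CHom ↥Y) := by
  have hres : Function.Bijective ((CHom.restrict X).prod (CHom.restrict Y)) :=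
    ⟨CHom.restrict_prod_injective hbij.surjective, CHom.restrict_prod_surjective hXo hUc hbij⟩
  exact ⟨hres, (LinearEquiv.ofBijective _ hres).rank_eq.trans rank_prod'⟩

/-- Let `G` be a t.d.l.c. group, `X, Y` open subgroups with
`U = X ⊓ Y` compact, such that the canonical homomorphism `X ∗_U Y → G` is
bijective.  Then restriction gives an `ℝ`-linear bijection
`CHom(G,ℝ) ≃ CHom(X,ℝ) × CHom(Y,ℝ)`; in particular the dimensions add up. -/
theorem chom_of_amalgam {G : Type*} [Group G] [TopologicalSpace G] [IsTopologicalGroup G]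
    [LocallyCompactSpace G] [TotallyDisconnectedSpace G] [T2Space G]
    (X Y : Subgroup G) (hXo : IsOpen (X : Set G)) (hYo : IsOpen (Y : Set G))
    (hUc : IsCompact ((X ⊓ Y : Subgroup G) : Set G))
    (hbij : Function.Bijective (amalgamToGroup X Y)) :
    Function.Bijective ((CHom.restrict X).prod (CHom.restrict Y)) ∧
      Module.rank ℝ (CHom G) = Module.rank ℝ (CHom ↥X) + Module.rank ℝ (CHom ↥Y) :=
  chom_of_amalgam_general X Y hXo hUc hbij
end

section
/- Let A be a unital C*-algebra and let τ : A → ℂ be a positive faithful trace, i.e., a ℂ-linear map with τ(ab) = τ(ba) for all a, b, with τ(a* a) a nonnegative real number for every a, and such that τ(a* a) = 0 implies a* a = 0. Then for every idempotent e ∈ A (e² = e), the value τ(e) is a real number satisfying 0 ≤ τ(e) ≤ τ(1); moreover τ(e) = 0 if and only if e = 0. -/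
open ComplexOrder

/-! Kaplansky: if `e` is idempotent, then `z = 1 + (e - e⋆)⋆ (e - e⋆)` commutes with `e` and `e⋆`,
and `e z = z e = e e⋆ e`. When `z` is invertible, as it is in a C⋆-algebra because `a⋆ a` has
nonnegative spectrum, `p = e e⋆ z⁻¹` is a star projection with `e p = p` and `p e = e`. Hence
`τ e = τ (p e) = τ (e p) = τ p`, and for a star projection `p = p⋆ p` and
`1 - p = (1 - p)⋆ (1 - p)`. -/

open scoped Ring

theorem commute_ringInverse_right {M₀ : Type*} [MonoidWithZero M₀] {a b : M₀}
    (h : Commute a b) : Commute a b⁻¹ʳ := by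
  by_cases hb : IsUnit b
  · obtain ⟨u, rfl⟩ := hb
    simpa only [Ring.inverse_unit] using h.units_inv_right
  · simpa only [Ring.inverse_non_unit b hb] using Commute.zero_right a

section RangeProjection

variable {A : Type*} [Ring A] [StarRing A] {e : A}

/-- Kaplansky's element `1 + (e - e⋆)⋆ (e - e⋆)`, the denominator in the formula for the range
projection of an idempotent `e`. -/
def kaplanskyElement (e : A) : A :=
  1 + star (e - star e) * (e - star e)

/-- The range projection `e e⋆ z⁻¹ʳ` of an idempotent `e`, with `z` its Kaplansky element.
Since `z⁻¹ʳ` is `0` at non-units, this is `0` when `z` is not invertible. -/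
noncomputable def rangeProjection (e : A) : A :=
  e * star e * (kaplanskyElement e)⁻¹ʳ

theorem isSelfAdjoint_kaplanskyElement (e : A) : IsSelfAdjoint (kaplanskyElement e) :=
  (IsSelfAdjoint.one A).add (.star_mul_self _)

theorem kaplanskyElement_eq (he : IsIdempotentElem e) :
    kaplanskyElement e = 1 - e - star e + e * star e + star e * e := by
  calc kaplanskyElement e = 1 - e * e - star e * star e + e * star e + star e * e := by
        simp only [kaplanskyElement, star_sub, star_star]
        noncomm_ring
    _ = 1 - e - star e + e * star e + star e * e := by rw [he.eq, he.star.eq]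

theorem mul_kaplanskyElement (he : IsIdempotentElem e) :
    e * kaplanskyElement e = e * star e * e := by
  simp only [kaplanskyElement_eq he, mul_add, mul_sub, ← mul_assoc, he.eq, mul_one]
  abel

theorem kaplanskyElement_mul (he : IsIdempotentElem e) :
    kaplanskyElement e * e = e * star e * e := by
  simp only [kaplanskyElement_eq he, add_mul, sub_mul, mul_assoc, he.eq, one_mul]
  abel

theorem commute_kaplanskyElement (he : IsIdempotentElem e) : Commute e (kaplanskyElement e) :=
  (mul_kaplanskyElement he).trans (kaplanskyElement_mul he).symm

theorem commute_star_kaplanskyElement (he : IsIdempotentElem e) :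
    Commute (star e) (kaplanskyElement e) := by
  simpa only [(isSelfAdjoint_kaplanskyElement e).star_eq] using
    (commute_kaplanskyElement he).star_star

theorem isSelfAdjoint_rangeProjection (he : IsIdempotentElem e) :
    IsSelfAdjoint (rangeProjection e) := by
  have hcomm : Commute (e * star e) (kaplanskyElement e)⁻¹ʳ :=
    commute_ringInverse_right
      ((commute_kaplanskyElement he).mul_left (commute_star_kaplanskyElement he))
  exact ((IsSelfAdjoint.mul_star_self e).commute_iff
    (isSelfAdjoint_kaplanskyElement e).ringInverse).mp hcomm

theorem mul_rangeProjection (he : IsIdempotentElem e) :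
    e * rangeProjection e = rangeProjection e := by
  simp only [rangeProjection, ← mul_assoc, he.eq]

theorem rangeProjection_mul (he : IsIdempotentElem e) (hz : IsUnit (kaplanskyElement e)) :
    rangeProjection e * e = e := by
  set z := kaplanskyElement e
  have hcomm : Commute e z⁻¹ʳ := commute_ringInverse_right (commute_kaplanskyElement he)
  calc e * star e * z⁻¹ʳ * e = e * star e * e * z⁻¹ʳ := by
        rw [mul_assoc, ← hcomm.eq, ← mul_assoc]
    _ = e * z * z⁻¹ʳ := by rw [mul_kaplanskyElement he]
    _ = e := Ring.mul_inverse_cancel_right _ _ hz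

theorem isStarProjection_rangeProjection (he : IsIdempotentElem e)
    (hz : IsUnit (kaplanskyElement e)) : IsStarProjection (rangeProjection e) where
  isIdempotentElem := by
    calc rangeProjection e * rangeProjection e
        = rangeProjection e * e * rangeProjection e := by
          rw [mul_assoc, mul_rangeProjection he]
      _ = rangeProjection e := by rw [rangeProjection_mul he hz, mul_rangeProjection he]
  isSelfAdjoint := isSelfAdjoint_rangeProjection he

end RangeProjection

section TracePositivity

variable {A G : Type*} [Ring A] [StarRing A] [AddCommGroup G] {τ : A →+ G} {p : A}

theorem eq_zero_of_isStarProjection_of_map_eq_zero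
    (hfaith : ∀ a : A, τ (star a * a) = 0 → star a * a = 0)
    (hp : IsStarProjection p) (h : τ p = 0) : p = 0 := by
  simpa only [hp.isSelfAdjoint.star_eq, hp.isIdempotentElem.eq, h, forall_const] using hfaith p

theorem map_nonneg_of_isStarProjection [PartialOrder G]
    (hpos : ∀ a : A, 0 ≤ τ (star a * a)) (hp : IsStarProjection p) : 0 ≤ τ p := by
  simpa only [hp.isSelfAdjoint.star_eq, hp.isIdempotentElem.eq] using hpos p

theorem map_le_map_one_of_isStarProjection [PartialOrder G] [IsOrderedAddMonoid G]
    (hpos : ∀ a : A, 0 ≤ τ (star a * a)) (hp : IsStarProjection p) : τ p ≤ τ 1 := by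
  simpa only [map_sub, sub_nonneg] using map_nonneg_of_isStarProjection hpos hp.one_sub

end TracePositivity

theorem isUnit_one_add_star_mul_self {A : Type*} [CStarAlgebra A] (a : A) :
    IsUnit (1 + star a * a) := by
  have h : (-1 : ℝ) ∉ spectrum ℝ (star a * a) := fun hmem =>
    absurd (spectrum_star_mul_self_nonneg (-1) hmem) (by norm_num)
  rw [spectrum.notMem_iff, map_neg, map_one, ← neg_add', IsUnit.neg_iff] at h
  exact h

theorem trace_idempotent_nonneg_le_trace_one_general {A G : Type*} [Ring A] [StarRing A]
    [AddCommGroup G] [PartialOrder G] [IsOrderedAddMonoid G]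
    (hunit : ∀ a : A, IsUnit (1 + star a * a))
    (τ : A →+ G) (htr : ∀ a b : A, τ (a * b) = τ (b * a))
    (hpos : ∀ a : A, 0 ≤ τ (star a * a))
    (hfaith : ∀ a : A, τ (star a * a) = 0 → star a * a = 0)
    (e : A) (he : e * e = e) :
    0 ≤ τ e ∧ τ e ≤ τ 1 ∧ (τ e = 0 ↔ e = 0) := by
  have hz : IsUnit (kaplanskyElement e) := hunit (e - star e)
  have hp : IsStarProjection (rangeProjection e) := isStarProjection_rangeProjection he hz
  have hτ : τ e = τ (rangeProjection e) := by
    rw [← mul_rangeProjection he, htr, rangeProjection_mul he hz]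
  refine ⟨?_, ?_, fun h => ?_, fun h => h ▸ map_zero τ⟩
  · exact hτ ▸ map_nonneg_of_isStarProjection hpos hp
  · exact hτ ▸ map_le_map_one_of_isStarProjection hpos hp
  · have hp0 : rangeProjection e = 0 :=
      eq_zero_of_isStarProjection_of_map_eq_zero hfaith hp (hτ ▸ h)
    rw [← rangeProjection_mul he hz, hp0, zero_mul]

/-- Let `τ` be a positive faithful trace on a unital C*-algebra
`A`.  Then for every idempotent `e` the value `τ(e)` is a (real) number with
`0 ≤ τ(e) ≤ τ(1)`, and `τ(e) = 0` if and only if `e = 0`.  (Here `ℂ` carries its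
partial order, so `0 ≤ z` means that `z` is a nonnegative real number.) -/
theorem trace_idempotent_nonneg_le_trace_one {A : Type*} [NormedRing A] [StarRing A]
    [CStarRing A] [NormedAlgebra ℂ A] [StarModule ℂ A] [CompleteSpace A]
    (τ : A →ₗ[ℂ] ℂ) (htr : ∀ a b : A, τ (a * b) = τ (b * a))
    (hpos : ∀ a : A, 0 ≤ τ (star a * a))
    (hfaith : ∀ a : A, τ (star a * a) = 0 → star a * a = 0)
    (e : A) (he : e * e = e) :
    0 ≤ τ e ∧ τ e ≤ τ 1 ∧ (τ e = 0 ↔ e = 0) := by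
  let _ : CStarAlgebra A := {}
  exact trace_idempotent_nonneg_le_trace_one_general isUnit_one_add_star_mul_self
    τ.toAddMonoidHom htr hpos hfaith e he
end
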